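/- Let D = (0,1)^d and let K : D̄ × D̄ → ℝ be measurable with K(x,·) ∈ L²(D) for every x, with Λ := sup_{x∈D̄} ‖K(x,·)‖_{L²(D)} < ∞, and such that ⟨∫_D K(·,y) φ(y) dy, φ⟩_{L²(D)} ≥ a ‖∫_D K(·,y) φ(y) dy‖²_{L²(D)} for every φ ∈ L²(D), for some constant a > 0. Let F : ℝ → ℝ be continuous and bounded with (x − y)(F(x) − F(y)) ≥ −L|x − y|² for all x, y ∈ ℝ and some 0 ≤ L < a, and let g ∈ L²(D). Suppose u, u_n ∈ 𝒞₀(D̄) and η, η_n ∈ 𝒞₀(D̄) satisfy u(x) + ∫_D K(x,y)F(u(y))dy = ∫_D K(x,y)g(y)dy + η(x) and u_n(x) + ∫_D K(x,y)F(u_n(y))dy = ∫_D K(x,y)g(y)dy + η_n(x) for all x ∈ D̄. If η_n → η uniformly on D̄, then u_n → u uniformly on D̄. In other words, the solution map Ψ : η ↦ u is continuous on 𝒞₀(D̄) with respect to the uniform norm. -/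

import Mathlib

open MeasureTheory

noncomputable section

/-- The open unit cube `D = (0,1)^d ⊆ ℝ^d`. -/
def openCube (d : ℕ) : Set (Fin d → ℝ) := Set.univ.pi fun _ => Set.Ioo (0 : ℝ) 1

/-- The closed unit cube `D̄ = [0,1]^d ⊆ ℝ^d`. -/
def closedCube (d : ℕ) : Set (Fin d → ℝ) := Set.Icc 0 1

/-- The boundary `∂D = D̄ \ D` of the unit cube. -/
def cubeBoundary (d : ℕ) : Set (Fin d → ℝ) := closedCube d \ openCube d

/-- Lebesgue measure on `D = (0,1)^d` (the reference measure for `L²(D)`). -/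
def cubeMeasure (d : ℕ) : Measure (Fin d → ℝ) := volume.restrict (openCube d)

/-- The Euclidean norm on `ℝ^d`. -/
def euclidNorm {d : ℕ} (v : Fin d → ℝ) : ℝ := Real.sqrt (∑ i, v i ^ 2)

open Filter Topology

lemma cube_sub (d : ℕ) : openCube d ⊆ closedCube d := by
  intro x hx
  simp only [openCube, Set.mem_pi, Set.mem_univ, true_imp_iff, Set.mem_Ioo] at hx
  exact ⟨fun i => (hx i).1.le, fun i => (hx i).2.le⟩

lemma cube_meas (d : ℕ) : MeasurableSet (openCube d) :=
  MeasurableSet.univ_pi fun _ => measurableSet_Ioo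

lemma cube_int {d : ℕ} {f : (Fin d → ℝ) → ℝ} (hf : ContinuousOn f (closedCube d)) :
    Integrable f (cubeMeasure d) := by
  have h : IntegrableOn f (closedCube d) volume := hf.integrableOn_compact isCompact_Icc
  exact h.mono_set (cube_sub d)

lemma cube_ae (d : ℕ) : ∀ᵐ x ∂(cubeMeasure d), x ∈ closedCube d := by
  filter_upwards [ae_restrict_mem (cube_meas d)] with x hx using cube_sub d hx

lemma cube_memLp {d : ℕ} {f : (Fin d → ℝ) → ℝ} (hf : ContinuousOn f (closedCube d)) :
    MemLp f 2 (cubeMeasure d) :=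
  (memLp_two_iff_integrable_sq (cube_int hf).1).2 (cube_int (hf.pow 2))

lemma cube_prob (d : ℕ) : IsProbabilityMeasure (cubeMeasure d) := by
  constructor
  rw [cubeMeasure, Measure.restrict_apply_univ, openCube, volume_pi_pi]
  simp

lemma sq_bound {d : ℕ} {f : (Fin d → ℝ) → ℝ} (hf : MemLp f 2 (cubeMeasure d)) {Λ : ℝ}
    (h : eLpNorm f 2 (cubeMeasure d) ≤ ENNReal.ofReal Λ) :
    ∫ x, f x ^ 2 ∂(cubeMeasure d) ≤ Λ ^ 2 := by
  have h1 : eLpNorm f 2 (cubeMeasure d) ≤ ENNReal.ofReal |Λ| :=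
    h.trans (ENNReal.ofReal_le_ofReal (le_abs_self _))
  rw [hf.eLpNorm_eq_integral_rpow_norm (by norm_num) (by norm_num)] at h1
  rw [ENNReal.ofReal_le_ofReal_iff (abs_nonneg _)] at h1
  simp only [ENNReal.toReal_ofNat, Real.rpow_two, Real.norm_eq_abs, sq_abs] at h1
  have h0 : 0 ≤ ∫ x, f x ^ 2 ∂(cubeMeasure d) := integral_nonneg fun x => sq_nonneg _
  rw [show ((2:ℝ)⁻¹) = 1/2 by norm_num, ← Real.sqrt_eq_rpow] at h1
  have := (Real.sqrt_le_left (abs_nonneg _)).1 h1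
  rwa [sq_abs] at this

lemma F_bound {F : ℝ → ℝ} (hF : Continuous F) {MF : ℝ} (hFbd : ∀ t, |F t| ≤ MF) (R : ℝ)
    {δ : ℝ} (hδ : 0 < δ) : ∃ C > 0, ∀ s t : ℝ, |t| ≤ R → (F s - F t) ^ 2 ≤ δ + C * (s - t) ^ 2 := by
  have hM : 0 ≤ MF := (abs_nonneg _).trans (hFbd 0)
  have huc := (isCompact_Icc (a := -R-1) (b := R+1)).uniformContinuousOn_of_continuous
    hF.continuousOn
  obtain ⟨ρ, hρ, h⟩ := Metric.uniformContinuousOn_iff.1 huc (Real.sqrt δ) (Real.sqrt_pos.2 hδ)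
  set r := min ρ 1 with hr
  have hr0 : 0 < r := lt_min hρ one_pos
  refine ⟨(4 * MF ^ 2 + 1) / r ^ 2, by positivity, fun s t ht => ?_⟩
  have ht' := abs_le.1 ht
  have hCn : 0 ≤ (4 * MF ^ 2 + 1) / r ^ 2 * (s - t) ^ 2 := by positivity
  by_cases hst : |s - t| < r
  · have h1 : |s - t| < 1 := hst.trans_le (min_le_right _ _)
    have h2 := abs_lt.1 h1
    have := h s ⟨by linarith, by linarith⟩ t ⟨by linarith, by linarith⟩
      (by rw [Real.dist_eq]; exact hst.trans_le (min_le_left _ _))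
    rw [Real.dist_eq] at this
    have h3 : (F s - F t) ^ 2 ≤ δ := by
      rw [← sq_abs, ← Real.sq_sqrt hδ.le]
      exact pow_le_pow_left₀ (abs_nonneg _) this.le 2
    linarith
  · push Not at hst
    have h1 : r ^ 2 ≤ (s - t) ^ 2 := by
      rw [← sq_abs (s - t)]; exact pow_le_pow_left₀ hr0.le hst 2
    have h2 : 4 * MF ^ 2 + 1 ≤ (4 * MF ^ 2 + 1) / r ^ 2 * (s - t) ^ 2 := by
      rw [div_mul_eq_mul_div, le_div_iff₀ (by positivity)]
      exact mul_le_mul_of_nonneg_left h1 (by positivity)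
    have h3 : (F s - F t) ^ 2 ≤ 4 * MF ^ 2 := by
      have a1 := abs_le.1 (hFbd s)
      have a2 := abs_le.1 (hFbd t)
      nlinarith
    linarith

set_option maxHeartbeats 1000000 in
/-- STATEMENT 13: Under the Poincaré-type inequality for the kernel `K` (with
`Λ = sup_x ‖K(x,·)‖_{L²} < ∞`), the monotonicity condition on the continuous bounded
function `F` with `0 ≤ L < a`, if `u, uₙ ∈ 𝒞₀(D̄)` solve the integral equations with
data `η, ηₙ ∈ 𝒞₀(D̄)` and `ηₙ → η` uniformly on `D̄`, then `uₙ → u` uniformly on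
`D̄`; i.e. the solution map `Ψ : η ↦ u` is continuous for the uniform norm. -/
theorem stmt14 (d : ℕ) (hd : 0 < d)
    (K : (Fin d → ℝ) → (Fin d → ℝ) → ℝ) (hKmeas : Measurable (Function.uncurry K))
    (hKL2 : ∀ x ∈ closedCube d, MemLp (K x) 2 (cubeMeasure d))
    (Λ : ℝ) (hΛ : ∀ x ∈ closedCube d, eLpNorm (K x) 2 (cubeMeasure d) ≤ ENNReal.ofReal Λ)
    (a : ℝ) (ha : 0 < a)
    (hPoincare : ∀ φ : (Fin d → ℝ) → ℝ, MemLp φ 2 (cubeMeasure d) →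
      a * ∫ x, (∫ y, K x y * φ y ∂(cubeMeasure d)) ^ 2 ∂(cubeMeasure d)
        ≤ ∫ x, (∫ y, K x y * φ y ∂(cubeMeasure d)) * φ x ∂(cubeMeasure d))
    (F : ℝ → ℝ) (hFcont : Continuous F) (MF : ℝ) (hFbd : ∀ t, |F t| ≤ MF)
    (L : ℝ) (hL0 : 0 ≤ L) (hLa : L < a)
    (hFmono : ∀ s t : ℝ, -(L * (s - t) ^ 2) ≤ (s - t) * (F s - F t))
    (g : (Fin d → ℝ) → ℝ) (hg : MemLp g 2 (cubeMeasure d))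
    (u : (Fin d → ℝ) → ℝ) (uₙ : ℕ → (Fin d → ℝ) → ℝ)
    (η : (Fin d → ℝ) → ℝ) (ηₙ : ℕ → (Fin d → ℝ) → ℝ)
    (hu : ContinuousOn u (closedCube d)) (hu0 : ∀ x ∈ cubeBoundary d, u x = 0)
    (huₙ : ∀ n, ContinuousOn (uₙ n) (closedCube d))
    (huₙ0 : ∀ n, ∀ x ∈ cubeBoundary d, uₙ n x = 0)
    (hη : ContinuousOn η (closedCube d)) (hη0 : ∀ x ∈ cubeBoundary d, η x = 0)
    (hηₙ : ∀ n, ContinuousOn (ηₙ n) (closedCube d))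
    (hηₙ0 : ∀ n, ∀ x ∈ cubeBoundary d, ηₙ n x = 0)
    (hequ : ∀ x ∈ closedCube d,
      u x + ∫ y, K x y * F (u y) ∂(cubeMeasure d)
        = (∫ y, K x y * g y ∂(cubeMeasure d)) + η x)
    (hequₙ : ∀ n, ∀ x ∈ closedCube d,
      uₙ n x + ∫ y, K x y * F (uₙ n y) ∂(cubeMeasure d)
        = (∫ y, K x y * g y ∂(cubeMeasure d)) + ηₙ n x)
    (hηconv : TendstoUniformlyOn (fun n => ηₙ n) η atTop (closedCube d)) :
    TendstoUniformlyOn (fun n => uₙ n) u atTop (closedCube d) := by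
  have hM : 0 ≤ MF := (abs_nonneg _).trans (hFbd 0)
  have := cube_prob d
  obtain ⟨R, hR⟩ := (isCompact_Icc (a := (0 : Fin d → ℝ)) (b := 1)).exists_bound_of_continuousOn hu
  rw [Metric.tendstoUniformlyOn_iff]
  intro κ hκ
  obtain ⟨t, ht⟩ : ∃ t, t = κ / (2 * (Λ ^ 2 + 1)) := ⟨_, rfl⟩
  have ht0 : 0 < t := by rw [ht]; positivity
  have htΛ : t / 2 * Λ ^ 2 ≤ κ / 4 := by
    have : t * (2 * (Λ ^ 2 + 1)) = κ := by rw [ht]; field_simp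
    nlinarith
  obtain ⟨δ, hδ⟩ : ∃ δ, δ = t * κ / 4 := ⟨_, rfl⟩
  have hδ0 : 0 < δ := by rw [hδ]; positivity
  obtain ⟨C, hC, hFC⟩ := F_bound hFcont hFbd R hδ0
  obtain ⟨c, hc⟩ : ∃ c, c = (a - L) / 2 := ⟨_, rfl⟩
  have hc0 : 0 < c := by rw [hc]; linarith
  obtain ⟨B, hB⟩ : ∃ B, B = a ^ 2 / c + 2 * MF := ⟨_, rfl⟩
  have hB0 : 0 < B := by rw [hB]; positivity
  obtain ⟨ε, hε⟩ : ∃ ε, ε = min (min 1 (κ / 4)) (c * δ / (C * B)) := ⟨_, rfl⟩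
  have hε0 : 0 < ε := by rw [hε]; positivity
  have hε1 : ε ≤ 1 := by rw [hε]; exact (min_le_left _ _).trans (min_le_left _ _)
  have hε2 : ε ≤ κ / 4 := by rw [hε]; exact (min_le_left _ _).trans (min_le_right _ _)
  have hε3 : ε * (C * B) ≤ c * δ := by
    rw [← le_div_iff₀ (by positivity), hε]; exact min_le_right _ _
  filter_upwards [Metric.tendstoUniformlyOn_iff.1 hηconv ε hε0] with n hn
  set φ : (Fin d → ℝ) → ℝ := fun x => F (uₙ n x) - F (u x) with hφ
  have cF1 : ContinuousOn (fun x => F (uₙ n x)) (closedCube d) := hFcont.comp_continuousOn (huₙ n)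
  have cF2 : ContinuousOn (fun x => F (u x)) (closedCube d) := hFcont.comp_continuousOn hu
  have cφ : ContinuousOn φ (closedCube d) := cF1.sub cF2
  set w : (Fin d → ℝ) → ℝ := fun x => uₙ n x - u x with hw
  have cw : ContinuousOn w (closedCube d) := (huₙ n).sub hu
  set e : (Fin d → ℝ) → ℝ := fun x => ηₙ n x - η x with he
  have ce : ContinuousOn e (closedCube d) := (hηₙ n).sub hη
  have hee : ∀ x ∈ closedCube d, |e x| ≤ ε := fun x hx => by
    have := hn x hx
    rw [dist_comm, Real.dist_eq] at this
    exact this.le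
  have hT : ∀ x ∈ closedCube d, ∫ y, K x y * φ y ∂(cubeMeasure d) = e x - w x := fun x hx => by
    have i1 : Integrable (fun y => K x y * F (uₙ n y)) (cubeMeasure d) :=
      (hKL2 x hx).integrable_mul (cube_memLp cF1)
    have i2 : Integrable (fun y => K x y * F (u y)) (cubeMeasure d) :=
      (hKL2 x hx).integrable_mul (cube_memLp cF2)
    have : ∫ y, K x y * φ y ∂(cubeMeasure d) = ∫ y, K x y * F (uₙ n y) ∂(cubeMeasure d)
        - ∫ y, K x y * F (u y) ∂(cubeMeasure d) := by
      rw [← integral_sub i1 i2]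
      simp only [hφ, mul_sub]
    have h1 := hequ x hx
    have h2 := hequₙ n x hx
    simp only [he, hw]
    linarith
  have hP := hPoincare φ (cube_memLp cφ)
  have e1 : ∫ x, (∫ y, K x y * φ y ∂(cubeMeasure d)) ^ 2 ∂(cubeMeasure d)
      = ∫ x, (e x - w x) ^ 2 ∂(cubeMeasure d) := integral_congr_ae (by
    filter_upwards [cube_ae d] with x hx
    rw [hT x hx])
  have e2 : ∫ x, (∫ y, K x y * φ y ∂(cubeMeasure d)) * φ x ∂(cubeMeasure d)
      = ∫ x, (e x - w x) * φ x ∂(cubeMeasure d) := integral_congr_ae (by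
    filter_upwards [cube_ae d] with x hx
    rw [hT x hx])
  rw [e1, e2, ← integral_const_mul] at hP
  have iw : Integrable (fun x => w x ^ 2) (cubeMeasure d) := cube_int (cw.pow 2)
  have iφ : Integrable (fun x => φ x ^ 2) (cubeMeasure d) := cube_int (cφ.pow 2)
  have iA : Integrable (fun x => a * (e x - w x) ^ 2) (cubeMeasure d) :=
    cube_int (continuousOn_const.mul ((ce.sub cw).pow 2))
  have iE : Integrable (fun x => (e x - w x) * φ x) (cubeMeasure d) :=
    cube_int ((ce.sub cw).mul cφ)
  have hW : c * ∫ x, w x ^ 2 ∂(cubeMeasure d) ≤ B * ε := by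
    have : ∫ x, (c * w x ^ 2 - B * ε) ∂(cubeMeasure d)
        ≤ ∫ x, (a * (e x - w x) ^ 2 - (e x - w x) * φ x) ∂(cubeMeasure d) := by
      refine integral_mono_ae ((iw.const_mul c).sub (integrable_const _)) (iA.sub iE) ?_
      filter_upwards [cube_ae d] with x hx
      have h1 := hee x hx
      have h2 : -(L * w x ^ 2) ≤ w x * φ x := hFmono (uₙ n x) (u x)
      have h3 : |φ x| ≤ 2 * MF := by
        have a1 := abs_le.1 (hFbd (uₙ n x))
        have a2 := abs_le.1 (hFbd (u x))
        rw [abs_le]; constructor <;> simp only [hφ] <;> linarith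
      have h4 : e x * φ x ≤ ε * (2 * MF) := by
        refine (le_abs_self _).trans ?_
        rw [abs_mul]
        exact mul_le_mul h1 h3 (abs_nonneg _) hε0.le
      have h5 : e x ^ 2 ≤ ε := by
        have : e x ^ 2 ≤ ε ^ 2 := by
          rw [← sq_abs]; exact pow_le_pow_left₀ (abs_nonneg _) h1 2
        nlinarith
      have h6 : 0 ≤ (c * w x - a * e x) ^ 2 / c := by positivity
      have h7 : (c * w x - a * e x) ^ 2 / c
          = c * w x ^ 2 - 2 * a * e x * w x + a ^ 2 / c * e x ^ 2 := by
        field_simp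
        ring
      have h8 : a ^ 2 / c * e x ^ 2 ≤ a ^ 2 / c * ε :=
        mul_le_mul_of_nonneg_left h5 (by positivity)
      have h9 : a = 2 * c + L := by rw [hc]; ring
      have h10 : a * w x ^ 2 = 2 * (c * w x ^ 2) + L * w x ^ 2 := by rw [h9]; ring
      have h11 : 0 ≤ a * e x ^ 2 := by positivity
      have h12 : B * ε = a ^ 2 / c * ε + 2 * MF * ε := by rw [hB]; ring
      show c * w x ^ 2 - B * ε ≤ a * (e x - w x) ^ 2 - (e x - w x) * φ x
      have h13 : a * (e x - w x) ^ 2 - (e x - w x) * φ x = a * e x ^ 2 - 2 * a * e x * w x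
        + a * w x ^ 2 - e x * φ x + w x * φ x := by ring
      rw [h13, h10, h12]
      rw [h7] at h6
      linarith
    rw [integral_sub (iw.const_mul c) (integrable_const _), integral_sub iA iE,
      integral_const_mul] at this
    simp at this
    linarith
  have hΦ : ∫ x, φ x ^ 2 ∂(cubeMeasure d) ≤ 2 * δ := by
    have : ∫ x, φ x ^ 2 ∂(cubeMeasure d) ≤ ∫ x, (δ + C * w x ^ 2) ∂(cubeMeasure d) := by
      refine integral_mono_ae iφ ((integrable_const _).add (iw.const_mul C)) ?_
      filter_upwards [cube_ae d] with x hx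
      exact hFC (uₙ n x) (u x) (hR x hx)
    rw [integral_add (integrable_const _) (iw.const_mul C), integral_const_mul] at this
    simp at this
    have h2 : c * (C * ∫ x, w x ^ 2 ∂(cubeMeasure d)) ≤ c * δ := by nlinarith
    have h3 := le_of_mul_le_mul_left h2 hc0
    linarith
  intro x hx
  rw [dist_comm, Real.dist_eq]
  have hK2 := sq_bound (hKL2 x hx) (hΛ x hx)
  have iK : Integrable (fun y => K x y ^ 2) (cubeMeasure d) := (hKL2 x hx).integrable_sq
  have hTb : |∫ y, K x y * φ y ∂(cubeMeasure d)| ≤ κ / 2 := by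
    refine abs_integral_le_integral_abs.trans ?_
    have : ∫ y, |K x y * φ y| ∂(cubeMeasure d)
        ≤ ∫ y, (t / 2 * K x y ^ 2 + 1 / (2 * t) * φ y ^ 2) ∂(cubeMeasure d) := by
      refine integral_mono ((hKL2 x hx).integrable_mul (cube_memLp cφ)).abs
        ((iK.const_mul _).add (iφ.const_mul _)) fun y => ?_
      show |K x y * φ y| ≤ t / 2 * K x y ^ 2 + 1 / (2 * t) * φ y ^ 2
      have p1 : 0 ≤ (t * K x y - φ y) ^ 2 / (2 * t) := by positivity
      have p2 : 0 ≤ (t * K x y + φ y) ^ 2 / (2 * t) := by positivity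
      have q1 : (t * K x y - φ y) ^ 2 / (2 * t)
        = t / 2 * K x y ^ 2 + 1 / (2 * t) * φ y ^ 2 - K x y * φ y := by field_simp; ring
      have q2 : (t * K x y + φ y) ^ 2 / (2 * t)
        = t / 2 * K x y ^ 2 + 1 / (2 * t) * φ y ^ 2 + K x y * φ y := by field_simp; ring
      rw [abs_le]; constructor <;> linarith
    rw [integral_add (iK.const_mul _) (iφ.const_mul _), integral_const_mul,
      integral_const_mul] at this
    have r1 : t / 2 * ∫ y, K x y ^ 2 ∂(cubeMeasure d) ≤ t / 2 * Λ ^ 2 :=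
      mul_le_mul_of_nonneg_left hK2 (by positivity)
    have r2 : 1 / (2 * t) * ∫ y, φ y ^ 2 ∂(cubeMeasure d) ≤ 1 / (2 * t) * (2 * δ) :=
      mul_le_mul_of_nonneg_left hΦ (by positivity)
    have r3 : 1 / (2 * t) * (2 * δ) = κ / 4 := by rw [hδ]; field_simp
    linarith
  rw [hT x hx] at hTb
  have s1 := abs_le.1 hTb
  have s2 := abs_le.1 (hee x hx)
  show |w x| < κ
  rw [abs_lt]; constructor <;> linarith
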